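/- arXiv:math/0101251 — 4 statements merged into one kernel-verified Lean document; each statement's English description precedes it below -/
import Mathlib

section
/- Let k ≥ 2 and let b₁,…,b_k be integers with b₁ ≥ 1, b_k ≥ 1, b_i ≥ 2 for all 1 < i < k, and with at least one of these inequalities strict (i.e. b₁ > 1, or b_k > 1, or b_i > 2 for some 1 < i < k). Write the matrix product [[0,-1],[1,b_k]] ⋯ [[0,-1],[1,b₁]] as [[-γ,-δ],[α,β]]. Then α, β, γ, δ are all positive; moreover β is the strictly largest of the four if and only if b₁ > 1 and b_k > 1; α is the strictly largest if and only if b₁ = 1 < b_k; δ is the strictly largest if and only if b₁ > 1 = b_k; and γ is the strictly largest if and only if b₁ = 1 = b_k. -/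
/-- The matrix `[[0,-1],[1,x]]`. -/
def Mb (x : ℤ) : Matrix (Fin 2) (Fin 2) ℤ := !![0, -1; 1, x]

/-- The product `[[0,-1],[1,b_k]] ⋯ [[0,-1],[1,b₁]]` for a list `[b₁,…,b_k]`. -/
def prodB (L : List ℤ) : Matrix (Fin 2) (Fin 2) ℤ := ((L.map Mb).reverse).prod

/-!
Peel off the two outer factors and write the product over the middle entries, all at least `2`, as
`N = [[-γ,-δ],[α,β]]`. The row `(1,1)` and the column `(-1,1)ᵀ` are fixed by `Mb 2`, so the pairing
`(1,1) N (-1,1)ᵀ = β - α - δ + γ` can only grow with each factor, and it grows strictly at a factor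
other than `Mb 2`. Bordering `N` by `Mb y` on the left and `Mb x` on the right, `y` decides
which row of the result dominates and `x` which column, so the two together single out a corner.
For `x = y = 1` the pairing is the lower right entry of the result, and the strict inequality in
the hypotheses is what makes it positive.
-/

lemma prodB_cons (a : ℤ) (L : List ℤ) : prodB (a :: L) = prodB L * Mb a := by
  simp [prodB]

lemma prodB_concat (L : List ℤ) (a : ℤ) : prodB (L ++ [a]) = Mb a * prodB L := by
  simp [prodB]

lemma mul_Mb (N : Matrix (Fin 2) (Fin 2) ℤ) (x : ℤ) :
    N * Mb x = !![N 0 1, x * N 0 1 - N 0 0; N 1 1, x * N 1 1 - N 1 0] := by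
  ext i j
  fin_cases i <;> fin_cases j <;> simp [Mb, Matrix.mul_apply] <;> ring

lemma Mb_mul (y : ℤ) (N : Matrix (Fin 2) (Fin 2) ℤ) :
    Mb y * N = !![-N 1 0, -N 1 1; N 0 0 + y * N 1 0, N 0 1 + y * N 1 1] := by
  ext i j
  fin_cases i <;> fin_cases j <;> simp [Mb, Matrix.mul_apply]

/-- The value of the pairing `(1,1) N (-1,1)ᵀ` at `N = [[-γ,-δ],[α,β]]`. It is the quantity
which detects a factor other than `Mb 2`, since `Mb 2` fixes both vectors. -/
def defect (γ δ α β : ℤ) : ℤ := β - α - δ + γ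

lemma defect_swap (γ δ α β : ℤ) : defect γ α δ β = defect γ δ α β := by
  unfold defect; ring

lemma defect_step (γ δ α β a : ℤ) :
    defect δ (a * δ - γ) β (a * β - α) = defect γ δ α β + (a - 2) * (β - δ) := by
  unfold defect; ring

/-- The entry `β'` of `Mb y * [[-γ,-δ],[α,β]] * Mb x = [[-γ',-δ'],[α',β']]`; the other three are
`γ' = β`, `δ' = x * β - α` and `α' = y * β - δ`. -/
def borderedβ (x y γ δ α β : ℤ) : ℤ := y * (x * β - α) - (x * δ - γ)

lemma borderedβ_swap (x y γ δ α β : ℤ) : borderedβ y x γ α δ β = borderedβ x y γ δ α β := by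
  unfold borderedβ; ring

lemma borderedβ_one_one (γ δ α β : ℤ) : borderedβ 1 1 γ δ α β = defect γ δ α β := by
  unfold borderedβ defect; ring

/-- The inequalities between the entries of `[[-γ,-δ],[α,β]]` which hold for every product of
matrices `Mb a` with `2 ≤ a`, the empty product included. The entries are passed as integers in
the order `γ δ α β`. -/
structure IsReducedBlock (γ δ α β : ℤ) : Prop where
  nonneg_δ : 0 ≤ δ
  nonneg_α : 0 ≤ α
  γ_lt_δ : γ < δ
  γ_lt_α : γ < α
  nonneg_defect : 0 ≤ defect γ δ α β

namespace IsReducedBlock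

variable {γ δ α β a x y : ℤ}

lemma swap (h : IsReducedBlock γ δ α β) : IsReducedBlock γ α δ β :=
  ⟨h.nonneg_α, h.nonneg_δ, h.γ_lt_α, h.γ_lt_δ, defect_swap γ δ α β ▸ h.nonneg_defect⟩

lemma δ_lt_β (h : IsReducedBlock γ δ α β) : δ < β := by
  have hdefect : 0 ≤ β - α - δ + γ := h.nonneg_defect
  linarith [h.γ_lt_α]

lemma α_lt_β (h : IsReducedBlock γ δ α β) : α < β := h.swap.δ_lt_β

lemma β_pos (h : IsReducedBlock γ δ α β) : 0 < β := h.nonneg_δ.trans_lt h.δ_lt_β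

lemma one : IsReducedBlock (-1) 0 0 1 := by
  constructor <;> norm_num [defect]

lemma δ_lt_mul_δ_sub_γ (h : IsReducedBlock γ δ α β) (ha : 2 ≤ a) : δ < a * δ - γ := by
  linarith [mul_le_mul_of_nonneg_right ha h.nonneg_δ, h.γ_lt_δ]

lemma step (h : IsReducedBlock γ δ α β) (ha : 2 ≤ a) :
    IsReducedBlock δ (a * δ - γ) β (a * β - α) where
  nonneg_δ := h.nonneg_δ.trans (h.δ_lt_mul_δ_sub_γ ha).le
  nonneg_α := h.β_pos.le
  γ_lt_δ := h.δ_lt_mul_δ_sub_γ ha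
  γ_lt_α := h.δ_lt_β
  nonneg_defect := by
    rw [defect_step]
    exact add_nonneg h.nonneg_defect
      (mul_nonneg (sub_nonneg.2 ha) (sub_nonneg.2 h.δ_lt_β.le))

lemma mul_β_sub_α_pos (h : IsReducedBlock γ δ α β) (hx : 1 ≤ x) : 0 < x * β - α := by
  linarith [mul_le_mul_of_nonneg_right hx h.β_pos.le, h.α_lt_β]

lemma β_lt_mul_β_sub_δ (h : IsReducedBlock γ δ α β) (hy : 1 < y) : β < y * β - δ := by
  linarith [mul_le_mul_of_nonneg_right (Int.add_one_le_of_lt hy) h.β_pos.le, h.δ_lt_β]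

lemma defect_add_le_borderedβ_sub (h : IsReducedBlock γ δ α β) (hx : 1 ≤ x) (hy : 1 < y) :
    defect γ δ α β + (x - 1) * (β - δ) ≤ borderedβ x y γ δ α β - (x * β - α) := by
  have hδ' := mul_le_mul_of_nonneg_right (Int.add_one_le_of_lt hy) (h.mul_β_sub_α_pos hx).le
  unfold defect borderedβ
  linarith

lemma le_borderedβ (h : IsReducedBlock γ δ α β) (hx : 1 ≤ x) (hy : 1 < y) :
    x * β - α ≤ borderedβ x y γ δ α β := by
  have hcol := mul_nonneg (sub_nonneg.2 hx) (sub_nonneg.2 h.δ_lt_β.le)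
  linarith [h.nonneg_defect, h.defect_add_le_borderedβ_sub hx hy]

lemma lt_borderedβ (h : IsReducedBlock γ δ α β) (hx : 1 < x) (hy : 1 < y) :
    x * β - α < borderedβ x y γ δ α β := by
  have hcol := mul_pos (sub_pos.2 hx) (sub_pos.2 h.δ_lt_β)
  linarith [h.nonneg_defect, h.defect_add_le_borderedβ_sub hx.le hy]

lemma borderedβ_one_right_lt (h : IsReducedBlock γ δ α β) (hx : 1 ≤ x) :
    borderedβ x 1 γ δ α β < x * β - α := by
  unfold borderedβ
  linarith [mul_le_mul_of_nonneg_right hx h.nonneg_δ, h.γ_lt_δ]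

lemma borderedβ_pos (h : IsReducedBlock γ δ α β) (hx : 1 ≤ x) (hy : 1 ≤ y)
    (hstrict : 1 < x ∨ 1 < y ∨ 0 < defect γ δ α β) : 0 < borderedβ x y γ δ α β := by
  rcases hy.eq_or_lt with rfl | hy
  · rcases hx.eq_or_lt with rfl | hx
    · simpa [borderedβ_one_one] using hstrict
    · rw [← borderedβ_swap]
      exact (h.swap.mul_β_sub_α_pos le_rfl).trans_le (h.swap.le_borderedβ le_rfl hx)
  · exact (h.mul_β_sub_α_pos hx).trans_le (h.le_borderedβ hx hy)

lemma borderedβ_greatest (h : IsReducedBlock γ δ α β) (hx : 1 < x) (hy : 1 < y) :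
    y * β - δ < borderedβ x y γ δ α β ∧ β < borderedβ x y γ δ α β ∧
      x * β - α < borderedβ x y γ δ α β := by
  have hα : y * β - δ < borderedβ x y γ δ α β := by
    simpa only [borderedβ_swap] using h.swap.lt_borderedβ hy hx
  exact ⟨hα, (h.β_lt_mul_β_sub_δ hy).trans hα, h.lt_borderedβ hx hy⟩

lemma borderedα_greatest (h : IsReducedBlock γ δ α β) (hy : 1 < y) :
    borderedβ 1 y γ δ α β < y * β - δ ∧ β < y * β - δ ∧ 1 * β - α < y * β - δ := by
  have hβ : borderedβ 1 y γ δ α β < y * β - δ := by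
    simpa only [borderedβ_swap] using h.swap.borderedβ_one_right_lt hy.le
  exact ⟨hβ, h.β_lt_mul_β_sub_δ hy, (h.le_borderedβ le_rfl hy).trans_lt hβ⟩

lemma borderedδ_greatest (h : IsReducedBlock γ δ α β) (hx : 1 < x) :
    1 * β - δ < x * β - α ∧ borderedβ x 1 γ δ α β < x * β - α ∧ β < x * β - α := by
  obtain ⟨hβ, hγ, hα⟩ := h.swap.borderedα_greatest hx
  exact ⟨hα, by simpa only [borderedβ_swap] using hβ, hγ⟩

lemma borderedγ_greatest (h : IsReducedBlock γ δ α β) (hα : 0 < α) (hδ : 0 < δ) :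
    1 * β - δ < β ∧ borderedβ 1 1 γ δ α β < β ∧ 1 * β - α < β := by
  have hβ := h.borderedβ_one_right_lt le_rfl
  exact ⟨by linarith, by linarith, by linarith⟩

end IsReducedBlock

lemma isReducedBlock_prodB {L : List ℤ} (hL : ∀ a ∈ L, 2 ≤ a) :
    IsReducedBlock (-prodB L 0 0) (-prodB L 0 1) (prodB L 1 0) (prodB L 1 1) := by
  induction L with
  | nil => simpa [prodB] using IsReducedBlock.one
  | cons a L ih =>
    obtain ⟨ha, hL⟩ := List.forall_mem_cons.1 hL
    simpa [prodB_cons, mul_Mb, neg_add_eq_sub] using (ih hL).step ha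

lemma defect_prodB_cons (a : ℤ) (L : List ℤ) :
    defect (-prodB (a :: L) 0 0) (-prodB (a :: L) 0 1) (prodB (a :: L) 1 0) (prodB (a :: L) 1 1) =
      defect (-prodB L 0 0) (-prodB L 0 1) (prodB L 1 0) (prodB L 1 1) +
        (a - 2) * (prodB L 1 1 - -prodB L 0 1) := by
  rw [← defect_step]
  simp [prodB_cons, mul_Mb, neg_add_eq_sub]

lemma defect_prodB_pos {L : List ℤ} (hL : ∀ a ∈ L, 2 ≤ a) (hlarge : ∃ a ∈ L, 2 < a) :
    0 < defect (-prodB L 0 0) (-prodB L 0 1) (prodB L 1 0) (prodB L 1 1) := by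
  induction L with
  | nil => simp at hlarge
  | cons a L ih =>
    obtain ⟨ha, hL⟩ := List.forall_mem_cons.1 hL
    have hblock := isReducedBlock_prodB hL
    have hgap := sub_pos.2 hblock.δ_lt_β
    rw [defect_prodB_cons]
    rcases (List.exists_mem_cons_iff ..).1 hlarge with ha' | hlarge
    · exact add_pos_of_nonneg_of_pos hblock.nonneg_defect (mul_pos (sub_pos.2 ha') hgap)
    · exact add_pos_of_pos_of_nonneg (ih hL hlarge) (mul_nonneg (sub_nonneg.2 ha) hgap.le)

lemma prodB_offDiag_pos {L : List ℤ} (hne : L ≠ []) (hL : ∀ a ∈ L, 2 ≤ a) :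
    0 < prodB L 1 0 ∧ 0 < -prodB L 0 1 := by
  obtain ⟨a, L, rfl⟩ := List.exists_cons_of_ne_nil hne
  obtain ⟨ha, hL⟩ := List.forall_mem_cons.1 hL
  have hblock := isReducedBlock_prodB hL
  have hδ := hblock.nonneg_δ.trans_lt (hblock.δ_lt_mul_δ_sub_γ ha)
  constructor
  · simpa [prodB_cons, mul_Mb] using hblock.β_pos
  · simpa [prodB_cons, mul_Mb, neg_add_eq_sub] using hδ

lemma prodB_cons_concat (x y : ℤ) (L : List ℤ) :
    prodB (x :: (L ++ [y])) =
      !![-prodB L 1 1, -(x * prodB L 1 1 - prodB L 1 0);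
        y * prodB L 1 1 - -prodB L 0 1,
        borderedβ x y (-prodB L 0 0) (-prodB L 0 1) (prodB L 1 0) (prodB L 1 1)] := by
  rw [prodB_cons, prodB_concat, mul_Mb, Mb_mul]
  ext i j
  fin_cases i <;> fin_cases j <;> simp [borderedβ] <;> ring

lemma exists_ofFn_eq_cons_concat {A : Type*} {n : ℕ} (b : Fin (n + 2) → A) :
    ∃ L, List.ofFn b = b 0 :: (L ++ [b (Fin.last (n + 1))]) ∧
      ∀ a, a ∈ L ↔ ∃ i : Fin (n + 2), 0 < i.val ∧ i.val < n + 1 ∧ b i = a := by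
  refine ⟨List.ofFn fun i : Fin n => b i.castSucc.succ, ?_, fun a => ?_⟩
  · rw [List.ofFn_succ, List.ofFn_succ_last, Fin.succ_last]
  · rw [List.mem_ofFn]
    constructor
    · rintro ⟨i, rfl⟩
      exact ⟨i.castSucc.succ, by simp, by simp, rfl⟩
    · rintro ⟨i, hpos, hlt, rfl⟩
      exact ⟨⟨i.val - 1, by omega⟩, congrArg b (Fin.ext (Nat.sub_add_cancel hpos))⟩

theorem stmt_1 (k : ℕ) (hk : 2 ≤ k) (b : Fin k → ℤ)
    (h1 : 1 ≤ b ⟨0, by omega⟩) (hk1 : 1 ≤ b ⟨k - 1, by omega⟩)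
    (hmid : ∀ i : Fin k, 0 < i.val → i.val < k - 1 → 2 ≤ b i)
    (hstrict : 1 < b ⟨0, by omega⟩ ∨ 1 < b ⟨k - 1, by omega⟩ ∨
      ∃ i : Fin k, 0 < i.val ∧ i.val < k - 1 ∧ 2 < b i) :
    let P := prodB (List.ofFn b)
    let α := P 1 0
    let β := P 1 1
    let γ := -P 0 0
    let δ := -P 0 1
    0 < α ∧ 0 < β ∧ 0 < γ ∧ 0 < δ ∧
    ((α < β ∧ γ < β ∧ δ < β) ↔ (1 < b ⟨0, by omega⟩ ∧ 1 < b ⟨k - 1, by omega⟩)) ∧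
    ((β < α ∧ γ < α ∧ δ < α) ↔ (b ⟨0, by omega⟩ = 1 ∧ 1 < b ⟨k - 1, by omega⟩)) ∧
    ((α < δ ∧ β < δ ∧ γ < δ) ↔ (1 < b ⟨0, by omega⟩ ∧ b ⟨k - 1, by omega⟩ = 1)) ∧
    ((α < γ ∧ β < γ ∧ δ < γ) ↔ (b ⟨0, by omega⟩ = 1 ∧ b ⟨k - 1, by omega⟩ = 1)) := by
  obtain ⟨n, rfl⟩ := Nat.exists_eq_add_of_le' hk
  obtain ⟨L, (hb : List.ofFn b = b ⟨0, by omega⟩ :: (L ++ [b ⟨n + 2 - 1, by omega⟩])), hmem⟩ :=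
    exists_ofFn_eq_cons_concat b
  generalize b ⟨0, by omega⟩ = x at *
  generalize b ⟨n + 2 - 1, by omega⟩ = y at *
  have hL : ∀ a ∈ L, 2 ≤ a := fun a ha => by
    obtain ⟨i, hpos, hlt, rfl⟩ := (hmem a).1 ha
    exact hmid i hpos hlt
  have hlarge : 1 < x ∨ 1 < y ∨ ∃ a ∈ L, 2 < a := hstrict.imp_right <| Or.imp_right
    fun ⟨i, hpos, hlt, hi⟩ => ⟨b i, (hmem _).2 ⟨i, hpos, hlt, rfl⟩, hi⟩
  have hblock := isReducedBlock_prodB hL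
  simp only [hb, prodB_cons_concat, Matrix.of_apply, Matrix.cons_val', Matrix.cons_val_zero,
    Matrix.cons_val_one, Matrix.cons_val_fin_one, neg_neg]
  refine ⟨hblock.swap.mul_β_sub_α_pos hk1,
    hblock.borderedβ_pos h1 hk1 (hlarge.imp_right (Or.imp_right (defect_prodB_pos hL))),
    hblock.β_pos, hblock.mul_β_sub_α_pos h1, ?_⟩
  -- At most one entry is strictly largest, so exhibiting it settles all four equivalences.
  rcases h1.eq_or_lt with rfl | hx <;> rcases hk1.eq_or_lt with rfl | hy
  · obtain ⟨a, ha, -⟩ : ∃ a ∈ L, 2 < a := by simpa using hlarge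
    obtain ⟨hα, hδ⟩ := prodB_offDiag_pos (List.ne_nil_of_mem ha) hL
    have := hblock.borderedγ_greatest hα hδ; omega
  · have := hblock.borderedα_greatest hy; omega
  · have := hblock.borderedδ_greatest hx; omega
  · have := hblock.borderedβ_greatest hx hy; omega
end

section
/- Let a, b, c, d be positive integers with ad − bc = 1. Then there exist k ≥ 2 and integers e₁,…,e_k with e_i ≥ 2 for all i and e_j ≥ 3 for at least one j, such that B(e₁−1, e₂, …, e_{k−1}, e_k−1) = [[a,b],[c,d]]. -/
/-- `B(b₁,…,b_k) = [[0,1],[-1,0]] · [[0,-1],[1,b_k]] ⋯ [[0,-1],[1,b₁]]`. -/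
def Bmat (L : List ℤ) : Matrix (Fin 2) (Fin 2) ℤ := !![0, 1; -1, 0] * prodB L

/-- The list `e₁-1, e₂, …, e_{k-1}, e_k-1`. -/
def cuspList (k : ℕ) (e : Fin k → ℤ) : List ℤ :=
  List.ofFn fun i => e i - (if i.val = 0 ∨ i.val = k - 1 then 1 else 0)

/-!
Multiplying on the left by `[[1,1],[0,1]]` or `[[1,0],[1,1]]` adds one row of a matrix to the other.
A matrix of determinant one with `a, c > 0` and `b ≥ 0` is reached from some `[[1,d-1],[1,d]]` by
such row operations (the subtractive Euclidean algorithm on the first column), and on the list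
`b₁, …, b_k` these replace `b_k` by `b_k + 1`, respectively by the two entries `b_k + 1, 1`.
Starting from the list `d, 1` of `[[1,d-1],[1,d]]`, this produces `e₁ - 1, e₂, …, e_k - 1` with all
`eᵢ ≥ 2`. If every `eᵢ` were `2`, then the list would be `1, 2, …, 2, 1` and its matrix
`[[1,0],[k-1,1]]`, contrary to `b > 0`.
-/

theorem prodB_append_singleton (L : List ℤ) (y : ℤ) : prodB (L ++ [y]) = Mb y * prodB L := by
  simp [prodB]

theorem Bmat_append_singleton (L : List ℤ) (y : ℤ) :
    Bmat (L ++ [y]) = !![1, y; 0, 1] * prodB L := by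
  rw [Bmat, prodB_append_singleton, ← mul_assoc]
  simp [Mb]

theorem Bmat_append_add (L : List ℤ) (y z : ℤ) :
    Bmat (L ++ [y + z]) = !![1, z; 0, 1] * Bmat (L ++ [y]) := by
  rw [Bmat_append_singleton, Bmat_append_singleton, ← mul_assoc]
  simp [add_comm]

theorem Bmat_append_append_one (L : List ℤ) (y : ℤ) :
    Bmat (L ++ [y] ++ [1]) = !![1, 0; 1, 1] * Bmat (L ++ [y - 1]) := by
  rw [Bmat_append_singleton, Bmat_append_singleton, prodB_append_singleton, ← mul_assoc,
    ← mul_assoc]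
  simp [Mb, neg_add_eq_sub]

theorem Bmat_pair (x y : ℤ) : Bmat [x, y] = !![y, y * x - 1; 1, x] := by
  simp [Bmat, prodB, Mb, sub_eq_neg_add]

theorem Bmat_one_replicate_two_one (n : ℕ) :
    Bmat (1 :: List.replicate n 2 ++ [1]) = !![1, 0; (n : ℤ) + 1, 1] := by
  induction n with
  | zero => simp [Bmat_pair]
  | succ n ih =>
    have hlist : 1 :: List.replicate (n + 1) (2 : ℤ) ++ [1] =
        1 :: List.replicate n 2 ++ [2] ++ [1] := by
      simp [List.replicate_succ']
    rw [hlist, Bmat_append_append_one, show (2 : ℤ) - 1 = 1 from rfl, ih]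
    simp [add_comm]

theorem exists_three_le_of_Bmat_zero_one_ne_zero {x y : ℤ} {l : List ℤ}
    (htwo : ∀ z ∈ x :: l ++ [y], 2 ≤ z) (hB : Bmat ((x - 1) :: l ++ [y - 1]) 0 1 ≠ 0) :
    ∃ z ∈ x :: l ++ [y], 3 ≤ z := by
  contrapose! hB
  have heq : ∀ z ∈ x :: l ++ [y], z = 2 := fun z hz =>
    le_antisymm (Int.le_of_lt_add_one (hB z hz)) (htwo z hz)
  obtain rfl : x = 2 := heq x (by simp)
  obtain rfl : y = 2 := heq y (by simp)
  have hl : l = List.replicate l.length 2 :=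
    List.eq_replicate_iff.2 ⟨rfl, fun z hz => heq z (by simp [hz])⟩
  rw [hl, show (2 : ℤ) - 1 = 1 from rfl, Bmat_one_replicate_two_one]
  simp

theorem row_add_induction_of_det_eq_one {P : Matrix (Fin 2) (Fin 2) ℤ → Prop}
    (base : ∀ d, 0 < d → P !![1, d - 1; 1, d])
    (upper : ∀ M, P M → P (!![1, 1; 0, 1] * M))
    (lower : ∀ M, P M → P (!![1, 0; 1, 1] * M))
    (a b c d : ℤ) (ha : 0 < a) (hb : 0 ≤ b) (hc : 0 < c) (hdet : a * d - b * c = 1) :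
    P !![a, b; c, d] := by
  have hd : 0 < d := by
    have : 0 < a * d := by linarith [mul_nonneg hb hc.le]
    exact pos_of_mul_pos_right this ha.le
  rcases lt_trichotomy a c with hac | rfl | hca
  · have hrow : !![a, b; c, d] = !![1, 0; 1, 1] * !![a, b; c - a, d - b] := by simp
    rw [hrow]
    exact lower _ (row_add_induction_of_det_eq_one base upper lower a b (c - a) (d - b) ha hb
      (by lia) (by linarith))
  · have ha1 : a = 1 := Int.eq_one_of_mul_eq_one_right ha.le (b := d - b) (by linarith)
    subst ha1
    obtain rfl : b = d - 1 := by linarith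
    exact base d hd
  · have hdb : d ≤ b := by
      by_contra! hbd
      have had : (c + 1) * d ≤ a * d := mul_le_mul_of_nonneg_right hca hd.le
      have hbc : (b + 1) * c ≤ d * c := mul_le_mul_of_nonneg_right hbd hc.le
      linarith
    have hrow : !![a, b; c, d] = !![1, 1; 0, 1] * !![a - c, b - d; c, d] := by simp
    rw [hrow]
    exact upper _ (row_add_induction_of_det_eq_one base upper lower (a - c) (b - d) c d
      (by lia) (by lia) hc (by linarith))
termination_by (a + c).toNat

theorem exists_two_le_Bmat_eq (a b c d : ℤ) (ha : 0 < a) (hb : 0 ≤ b) (hc : 0 < c)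
    (hdet : a * d - b * c = 1) :
    ∃ (x y : ℤ) (l : List ℤ), (∀ z ∈ x :: l ++ [y], 2 ≤ z) ∧
      Bmat ((x - 1) :: l ++ [y - 1]) = !![a, b; c, d] := by
  refine row_add_induction_of_det_eq_one (P := fun M => ∃ (x y : ℤ) (l : List ℤ),
    (∀ z ∈ x :: l ++ [y], 2 ≤ z) ∧ Bmat ((x - 1) :: l ++ [y - 1]) = M)
    ?base ?upper ?lower a b c d ha hb hc hdet
  case base =>
    intro d hd
    exact ⟨d + 1, 2, [], by simpa using Int.add_le_add_right hd 1, by simp [Bmat_pair]⟩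
  case upper =>
    rintro _ ⟨x, y, l, htwo, rfl⟩
    obtain ⟨hinit, hy⟩ := List.forall_mem_append.1 htwo
    refine ⟨x, y + 1, l, List.forall_mem_append.2 ⟨hinit, ?_⟩, ?_⟩
    · rw [List.forall_mem_singleton] at hy ⊢
      lia
    · rw [← Bmat_append_add, sub_add_eq_add_sub]
  case lower =>
    rintro _ ⟨x, y, l, htwo, rfl⟩
    refine ⟨x, 2, l ++ [y], List.forall_mem_append.2 ⟨htwo, by simp⟩, ?_⟩
    rw [← List.cons_append, show (2 : ℤ) - 1 = 1 from rfl, Bmat_append_append_one]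

theorem cuspList_get (x y : ℤ) (l : List ℤ) :
    cuspList _ (x :: l ++ [y]).get = (x - 1) :: l ++ [y - 1] := by
  refine List.ext_getElem (by simp [cuspList]) fun i _ hi => ?_
  simp only [cuspList, List.getElem_ofFn, List.get_eq_getElem]
  obtain rfl | rfl | ⟨j, hj, rfl⟩ : i = 0 ∨ i = l.length + 1 ∨ ∃ j < l.length, i = j + 1 := by
    rcases i with _ | j
    · exact Or.inl rfl
    · simp only [List.length_append, List.length_cons, List.length_nil] at hi
      obtain hj | rfl := Nat.lt_or_eq_of_le (show j ≤ l.length by lia)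
      · exact Or.inr (Or.inr ⟨j, hj, rfl⟩)
      · exact Or.inr (Or.inl rfl)
  · simp
  · simp
  · simp [List.getElem_append_left hj, hj.ne]

theorem stmt_3 (a b c d : ℤ) (ha : 0 < a) (hb : 0 < b) (hc : 0 < c) (hd : 0 < d)
    (hdet : a * d - b * c = 1) :
    ∃ (k : ℕ) (e : Fin k → ℤ), 2 ≤ k ∧ (∀ i, 2 ≤ e i) ∧ (∃ j, 3 ≤ e j) ∧
      Bmat (cuspList k e) = !![a, b; c, d] := by
  obtain ⟨x, y, l, htwo, hB⟩ := exists_two_le_Bmat_eq a b c d ha hb.le hc hdet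
  have hthree : ∃ z ∈ x :: l ++ [y], 3 ≤ z :=
    exists_three_le_of_Bmat_zero_one_ne_zero htwo (by rw [hB]; exact hb.ne')
  exact ⟨_, (x :: l ++ [y]).get, by simp, List.forall_mem_iff_get.1 htwo,
    List.exists_mem_iff_get.1 hthree, by rw [cuspList_get, hB]⟩
end

section
/- Let π be the presented group below and set s = (x₁x₂)² x₁^{−2a−2} y₁^{−c} ∈ π. Then the subgroup of π generated by s, x₁^{4b}, y₁² equals the subgroup of π generated by s, x₂^{4b}, y₂². -/
/-- The relators of the fundamental group
`⟨x₁,y₁,x₂,y₂ | x₁⁻¹y₁x₁ = y₁⁻¹, x₂⁻¹y₂x₂ = y₂⁻¹, x₂² = x₁^{2a}y₁^{c}, y₂ = x₁^{2b}y₁^{d}⟩`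
of the link of the quotient-cusp classified by `[[a,b],[c,d]]`.
The generators `x₁, y₁, x₂, y₂` are indexed by `0, 1, 2, 3 : Fin 4`. -/
def quotientCuspRels (a b c d : ℕ) : Set (FreeGroup (Fin 4)) :=
  { (FreeGroup.of 0)⁻¹ * FreeGroup.of 1 * FreeGroup.of 0 * FreeGroup.of 1,
    (FreeGroup.of 2)⁻¹ * FreeGroup.of 3 * FreeGroup.of 2 * FreeGroup.of 3,
    (FreeGroup.of 2) ^ 2 * ((FreeGroup.of 0) ^ (2 * a) * (FreeGroup.of 1) ^ c)⁻¹,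
    FreeGroup.of 3 * ((FreeGroup.of 0) ^ (2 * b) * (FreeGroup.of 1) ^ d)⁻¹ }

/-! The relation `x₁⁻¹y₁x₁ = y₁⁻¹` makes `x₁²` commute with `y₁`, so `u = x₁^{4b}` and `v = y₁²`
commute. The relations defining `x₂²` and `y₂` then give `x₂^{4b} = u^a v^{bc}` and `y₂² = u v^d`.
The exponent matrix `[[a, bc], [1, d]]` has determinant `ad - bc = 1`, so it is invertible over `ℤ`
and the two pairs generate the same subgroup, even without `s`. -/

section Group

variable {G : Type*} [Group G]

theorem closure_insert_congr {A B : Set G} (g : G)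
    (h : Subgroup.closure A = Subgroup.closure B) :
    Subgroup.closure (insert g A) = Subgroup.closure (insert g B) := by
  rw [Set.insert_eq, Set.insert_eq, Subgroup.closure_union, Subgroup.closure_union, h]

theorem commute_sq_of_conj_eq_inv {x y : G} (h : x⁻¹ * y * x = y⁻¹) : Commute (x ^ 2) y := by
  have hsemi : SemiconjBy x y⁻¹ y := by
    rw [← h, SemiconjBy]
    group
  have hsemi_inv : SemiconjBy x y y⁻¹ := SemiconjBy.inv_right_iff.mp (by rwa [inv_inv])
  rw [sq]
  exact hsemi.mul_left hsemi_inv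

theorem commute_zpow_two_mul_of_conj_eq_inv {x y : G} (h : x⁻¹ * y * x = y⁻¹) (m n : ℤ) :
    Commute (x ^ (2 * m)) (y ^ n) := by
  rw [zpow_mul, zpow_ofNat]
  exact (commute_sq_of_conj_eq_inv h).zpow_zpow m n

theorem zpow_mul_zpow_zpow {u v : G} (h : Commute u v) (m n k : ℤ) :
    (u ^ m * v ^ n) ^ k = u ^ (m * k) * v ^ (n * k) := by
  rw [(h.zpow_zpow m n).mul_zpow, ← zpow_mul, ← zpow_mul]

theorem zpow_mul_zpow_mul_zpow_mul_zpow {u v : G} (h : Commute u v) (m n m' n' : ℤ) :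
    u ^ m * v ^ n * (u ^ m' * v ^ n') = u ^ (m + m') * v ^ (n + n') := by
  rw [(h.symm.zpow_zpow n m').mul_mul_mul_comm, ← zpow_add, ← zpow_add]

theorem closure_zpow_mul_zpow_pair_le (u v : G) (p q r s : ℤ) :
    Subgroup.closure {u ^ p * v ^ q, u ^ r * v ^ s} ≤ Subgroup.closure {u, v} := by
  have hu : u ∈ Subgroup.closure {u, v} := Subgroup.subset_closure (by simp)
  have hv : v ∈ Subgroup.closure {u, v} := Subgroup.subset_closure (by simp)
  rw [Subgroup.closure_le]
  rintro g (rfl | rfl) <;> exact mul_mem (zpow_mem hu _) (zpow_mem hv _)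

theorem closure_zpow_mul_zpow_pair {u v : G} (h : Commute u v) {p q r s : ℤ}
    (hdet : IsUnit (p * s - q * r)) :
    Subgroup.closure {u ^ p * v ^ q, u ^ r * v ^ s} = Subgroup.closure {u, v} := by
  refine (closure_zpow_mul_zpow_pair_le u v p q r s).antisymm ?_
  obtain ⟨e, he⟩ := hdet.exists_right_inv
  -- The exponents are the rows of the inverse matrix `e • [[s, -q], [-r, p]]`.
  have hu : u = (u ^ p * v ^ q) ^ (s * e) * (u ^ r * v ^ s) ^ (-q * e) := by
    rw [zpow_mul_zpow_zpow h, zpow_mul_zpow_zpow h, zpow_mul_zpow_mul_zpow_mul_zpow h,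
      show p * (s * e) + r * (-q * e) = 1 by linear_combination he,
      show q * (s * e) + s * (-q * e) = 0 by ring, zpow_one, zpow_zero, mul_one]
  have hv : v = (u ^ p * v ^ q) ^ (-r * e) * (u ^ r * v ^ s) ^ (p * e) := by
    rw [zpow_mul_zpow_zpow h, zpow_mul_zpow_zpow h, zpow_mul_zpow_mul_zpow_mul_zpow h,
      show p * (-r * e) + r * (p * e) = 0 by ring,
      show q * (-r * e) + s * (p * e) = 1 by linear_combination he, zpow_one, zpow_zero, one_mul]
  have hle := closure_zpow_mul_zpow_pair_le (u ^ p * v ^ q) (u ^ r * v ^ s)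
    (s * e) (-q * e) (-r * e) (p * e)
  rwa [← hu, ← hv] at hle

theorem stmt_9_general {x₁ y₁ x₂ y₂ : G} {a b c d : ℤ} (hdet : IsUnit (a * d - b * c))
    (hconj : x₁⁻¹ * y₁ * x₁ = y₁⁻¹) (hx₂ : x₂ ^ 2 = x₁ ^ (2 * a) * y₁ ^ c)
    (hy₂ : y₂ = x₁ ^ (2 * b) * y₁ ^ d) :
    Subgroup.closure {x₁ ^ (4 * b), y₁ ^ 2} = Subgroup.closure {x₂ ^ (4 * b), y₂ ^ 2} := by
  have hcomm := commute_zpow_two_mul_of_conj_eq_inv hconj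
  have huv : Commute (x₁ ^ (4 * b)) (y₁ ^ 2) := by
    simpa only [← mul_assoc, Int.reduceMul, zpow_ofNat] using hcomm (2 * b) 2
  have hx₂_zpow : x₂ ^ (4 * b) = (x₁ ^ (4 * b)) ^ a * (y₁ ^ 2) ^ (b * c) :=
    calc x₂ ^ (4 * b) = (x₂ ^ 2) ^ (2 * b) := by rw [← zpow_natCast, ← zpow_mul]; ring_nf
      _ = (x₁ ^ (2 * a)) ^ (2 * b) * (y₁ ^ c) ^ (2 * b) := by rw [hx₂, (hcomm a c).mul_zpow]
      _ = (x₁ ^ (4 * b)) ^ a * (y₁ ^ 2) ^ (b * c) := by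
        simp only [← zpow_natCast, ← zpow_mul]
        ring_nf
  have hy₂_sq : y₂ ^ 2 = (x₁ ^ (4 * b)) ^ (1 : ℤ) * (y₁ ^ 2) ^ d := by
    rw [hy₂, (hcomm b d).mul_pow]
    simp only [← zpow_natCast, ← zpow_mul]
    ring_nf
  rw [hx₂_zpow, hy₂_sq, closure_zpow_mul_zpow_pair huv (by rwa [mul_one])]

end Group

namespace quotientCuspRels

variable (a b c d : ℕ)

theorem conj_of_one_eq_inv :
    (PresentedGroup.of 0)⁻¹ * PresentedGroup.of 1 * PresentedGroup.of 0 =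
      (PresentedGroup.of 1 : PresentedGroup (quotientCuspRels a b c d))⁻¹ :=
  eq_inv_of_mul_eq_one_left <| PresentedGroup.one_of_mem
    (x := (FreeGroup.of 0)⁻¹ * FreeGroup.of 1 * FreeGroup.of 0 * FreeGroup.of 1)
    (by simp [quotientCuspRels])

theorem of_two_sq :
    (PresentedGroup.of 2 : PresentedGroup (quotientCuspRels a b c d)) ^ 2 =
      PresentedGroup.of 0 ^ (2 * a) * PresentedGroup.of 1 ^ c :=
  PresentedGroup.mk_eq_mk_of_mul_inv_mem
    (x := FreeGroup.of 2 ^ 2) (y := FreeGroup.of 0 ^ (2 * a) * FreeGroup.of 1 ^ c)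
    (by simp [quotientCuspRels])

theorem of_three_eq :
    (PresentedGroup.of 3 : PresentedGroup (quotientCuspRels a b c d)) =
      PresentedGroup.of 0 ^ (2 * b) * PresentedGroup.of 1 ^ d :=
  PresentedGroup.mk_eq_mk_of_mul_inv_mem
    (x := FreeGroup.of 3) (y := FreeGroup.of 0 ^ (2 * b) * FreeGroup.of 1 ^ d)
    (by simp [quotientCuspRels])

end quotientCuspRels

theorem stmt_9 (a b c d : ℕ) (ha : 0 < a) (hb : 0 < b) (hc : 0 < c) (hd : 0 < d)
    (hdet : a * d = b * c + 1) :
    Subgroup.closure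
        { ((PresentedGroup.of 0 * PresentedGroup.of 2) ^ 2 *
            ((PresentedGroup.of 0) ^ (2 * a + 2))⁻¹ * ((PresentedGroup.of 1) ^ c)⁻¹ :
            PresentedGroup (quotientCuspRels a b c d)),
          (PresentedGroup.of 0) ^ (4 * b), (PresentedGroup.of 1) ^ 2 } =
      Subgroup.closure
        { ((PresentedGroup.of 0 * PresentedGroup.of 2) ^ 2 *
            ((PresentedGroup.of 0) ^ (2 * a + 2))⁻¹ * ((PresentedGroup.of 1) ^ c)⁻¹ :
            PresentedGroup (quotientCuspRels a b c d)),
          (PresentedGroup.of 2) ^ (4 * b), (PresentedGroup.of 3) ^ 2 } := by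
  have hunit : IsUnit ((a : ℤ) * d - b * c) := Int.isUnit_iff.mpr (.inl (by lia))
  have hpair := stmt_9_general hunit (quotientCuspRels.conj_of_one_eq_inv a b c d)
    (mod_cast quotientCuspRels.of_two_sq a b c d) (mod_cast quotientCuspRels.of_three_eq a b c d)
  exact closure_insert_congr _ (mod_cast hpair)
end

section
/- The group G is a finite abelian group of order 16b. -/
/-!
Besides `T = S₁ S₂⁻¹`, the generators satisfy `S₄ = T^a S₁^(2b) S₃` and `S₃² = T^c S₁^(2d)`, the
latter because `ad = bc + 1`. Hence `G` is generated by `T`, `S₁` and `S₃`. Adjoin these one at a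
time: `T` has order `2`; the last diagonal entry is trivial on `T` and shows that `S₁` keeps its
order `4b` modulo `⟨T⟩`; the quotient of the last two entries is trivial on `T` and `S₁` and is `-1`
on `S₃`, whose square lies in `⟨T, S₁⟩`. The order of `G` is therefore `2 · 4b · 2`.
-/

section Group

variable {G : Type*} [Group G]

theorem card_sup_zpowers (H : Subgroup G) [H.Normal] (x : G) :
    Nat.card ↥(H ⊔ Subgroup.zpowers x) = Nat.card H * orderOf (x : G ⧸ H) := by
  have hindex : H.relIndex (H ⊔ Subgroup.zpowers x) = orderOf (x : G ⧸ H) := by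
    calc H.relIndex (H ⊔ Subgroup.zpowers x)
        = (QuotientGroup.mk' H).ker.relIndex (Subgroup.zpowers x) := by
          rw [Subgroup.relIndex_sup_left, QuotientGroup.ker_mk']
      _ = orderOf (x : G ⧸ H) := by
          rw [Subgroup.relIndex_ker, MonoidHom.map_zpowers, Nat.card_zpowers,
            QuotientGroup.mk'_apply]
  rw [← hindex, ← Subgroup.relIndex_bot_left, ← Subgroup.relIndex_bot_left,
    Subgroup.relIndex_mul_relIndex _ _ _ bot_le le_sup_left]

theorem orderOf_quotient_mk_eq_of_le_ker {M : Type*} [Monoid M] {H : Subgroup G} [H.Normal]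
    (f : G →* M) (hH : H ≤ f.ker) {x : G} (hx : x ^ orderOf (f x) ∈ H) :
    orderOf (x : G ⧸ H) = orderOf (f x) := by
  apply Nat.dvd_antisymm
  · rw [orderOf_dvd_iff_pow_eq_one, ← QuotientGroup.mk_pow, QuotientGroup.eq_one_iff]
    exact hx
  · exact orderOf_map_dvd (QuotientGroup.lift H f hH) (x : G ⧸ H)

theorem card_sup_zpowers_of_le_ker {M : Type*} [Monoid M] {H : Subgroup G} [H.Normal]
    (f : G →* M) (hH : H ≤ f.ker) {x : G} (hx : x ^ orderOf (f x) ∈ H) :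
    Nat.card ↥(H ⊔ Subgroup.zpowers x) = Nat.card H * orderOf (f x) := by
  rw [card_sup_zpowers, orderOf_quotient_mk_eq_of_le_ker f hH hx]

theorem closure_eq_sup_zpowers {t x y z : G}
    (hz : z ∈ Subgroup.zpowers t ⊔ Subgroup.zpowers x ⊔ Subgroup.zpowers y) :
    Subgroup.closure {x, t * x, y, z} =
      Subgroup.zpowers t ⊔ Subgroup.zpowers x ⊔ Subgroup.zpowers y := by
  apply le_antisymm
  · have ht : t ∈ Subgroup.zpowers t ⊔ Subgroup.zpowers x ⊔ Subgroup.zpowers y :=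
      Subgroup.mem_sup_left (Subgroup.mem_sup_left (Subgroup.mem_zpowers t))
    have hx : x ∈ Subgroup.zpowers t ⊔ Subgroup.zpowers x ⊔ Subgroup.zpowers y :=
      Subgroup.mem_sup_left (Subgroup.mem_sup_right (Subgroup.mem_zpowers x))
    rw [Subgroup.closure_le]
    rintro _ (rfl | rfl | rfl | rfl)
    exacts [hx, mul_mem ht hx, Subgroup.mem_sup_right (Subgroup.mem_zpowers _), hz]
  · have hx : x ∈ Subgroup.closure {x, t * x, y, z} := Subgroup.subset_closure (by simp)
    have htx : t * x ∈ Subgroup.closure {x, t * x, y, z} := Subgroup.subset_closure (by simp)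
    have hy : y ∈ Subgroup.closure {x, t * x, y, z} := Subgroup.subset_closure (by simp)
    simp only [sup_le_iff, Subgroup.zpowers_le]
    exact ⟨⟨(Subgroup.mul_mem_cancel_right _ hx).1 htx, hx⟩, hy⟩

end Group

section DiagonalVectors

variable {M : Type*} [CommMonoid M] [HasDistribNeg M]

/-- The diagonal of `T`. Invertible diagonal matrices are treated as vectors in `Fin 4 → M` with
entrywise multiplication, where `M` is the group of units of the coefficients. -/
def diagT (M : Type*) [CommMonoid M] [HasDistribNeg M] : Fin 4 → M := ![-1, -1, 1, 1]

/-- The diagonal of `S₁`, with `w` in the role of `ω`. -/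
def diagS₁ (a : ℕ) (w : M) : Fin 4 → M := ![-w ^ a, w ^ a, w, w]

/-- The diagonal of `S₂`, with `w` in the role of `ω`. -/
def diagS₂ (a : ℕ) (w : M) : Fin 4 → M := ![w ^ a, -w ^ a, w, w]

/-- The diagonal of `S₃`, with `w` in the role of `ω`. -/
def diagS₃ (d : ℕ) (w : M) : Fin 4 → M := ![w, w, -w ^ d, w ^ d]

/-- The diagonal of `S₄`, with `w` in the role of `ω`. -/
def diagS₄ (d : ℕ) (w : M) : Fin 4 → M := ![w, w, w ^ d, -w ^ d]

theorem diagT_sq : diagT M ^ 2 = 1 := by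
  funext i
  fin_cases i <;> simp [diagT]

theorem diagS₂_eq (a : ℕ) (w : M) : diagS₂ a w = diagT M * diagS₁ a w := by
  funext i
  fin_cases i <;> simp [diagS₂, diagT, diagS₁]

theorem diagS₁_pow_two_mul {b : ℕ} {w : M} (hw : w ^ (2 * b) = -1) (a : ℕ) :
    diagS₁ a w ^ (2 * b) = ![(-1) ^ a, (-1) ^ a, -1, -1] := by
  have hwa : (w ^ a) ^ (2 * b) = (-1) ^ a := by rw [pow_right_comm, hw]
  funext i
  fin_cases i <;> simp [diagS₁, (even_two_mul b).neg_pow, hwa, hw]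

theorem diagS₁_pow_four_mul {b : ℕ} {w : M} (hw : w ^ (2 * b) = -1) (a : ℕ) :
    diagS₁ a w ^ (4 * b) = 1 := by
  rw [show 4 * b = 2 * b * 2 by ring, pow_mul, diagS₁_pow_two_mul hw]
  funext i
  fin_cases i <;> simp [pow_right_comm _ a 2]

theorem diagS₄_eq {b : ℕ} {w : M} (hw : w ^ (2 * b) = -1) (a d : ℕ) :
    diagS₄ d w = diagT M ^ a * diagS₁ a w ^ (2 * b) * diagS₃ d w := by
  rw [diagS₁_pow_two_mul hw]
  funext i
  fin_cases i <;> simp [diagS₄, diagS₃, diagT, ← mul_pow]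

theorem diagS₃_sq {a b c d : ℕ} (hdet : a * d = b * c + 1) {w : M} (hw : w ^ (2 * b) = -1) :
    diagS₃ d w ^ 2 = diagT M ^ c * diagS₁ a w ^ (2 * d) := by
  have hwad : (w ^ a) ^ (2 * d) = (-1) ^ c * w ^ 2 := by
    calc (w ^ a) ^ (2 * d) = w ^ (2 * (a * d)) := by rw [← pow_mul]; congr 1; ring
      _ = w ^ (2 * b * c + 2) := by rw [hdet]; congr 1; ring
      _ = (-1) ^ c * w ^ 2 := by rw [pow_add, pow_mul, hw]
  have hsq : w ^ 2 = (-1) ^ c * (w ^ a) ^ (2 * d) := by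
    rw [hwad, ← mul_assoc, ← mul_pow]
    simp
  funext i
  fin_cases i
  · simpa [diagS₃, diagT, diagS₁, (even_two_mul d).neg_pow] using hsq
  · simpa [diagS₃, diagT, diagS₁] using hsq
  · simp [diagS₃, diagT, diagS₁, pow_mul']
  · simp [diagS₃, diagT, diagS₁, pow_mul']

end DiagonalVectors

section DiagonalSubgroups

variable {M : Type*} [CommGroup M] [HasDistribNeg M]

theorem card_zpowers_diagT (hneg : (-1 : M) ≠ 1) :
    Nat.card (Subgroup.zpowers (diagT M)) = 2 := by
  rw [Nat.card_zpowers]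
  exact orderOf_eq_prime diagT_sq fun hT => hneg (congrFun hT 0)

theorem card_zpowers_diagT_sup_diagS₁ {b : ℕ} {w : M} (hw : w ^ (2 * b) = -1)
    (hord : orderOf w = 4 * b) (hneg : (-1 : M) ≠ 1) (a : ℕ) :
    Nat.card ↥(Subgroup.zpowers (diagT M) ⊔ Subgroup.zpowers (diagS₁ a w)) = 8 * b := by
  let lastEntry : (Fin 4 → M) →* M := Pi.evalMonoidHom (fun _ => M) 3
  have hS₁ : orderOf (lastEntry (diagS₁ a w)) = 4 * b := hord
  have hker : Subgroup.zpowers (diagT M) ≤ lastEntry.ker := by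
    rw [Subgroup.zpowers_le, MonoidHom.mem_ker]
    rfl
  have hpow : diagS₁ a w ^ orderOf (lastEntry (diagS₁ a w)) ∈ Subgroup.zpowers (diagT M) := by
    rw [hS₁, diagS₁_pow_four_mul hw]
    exact one_mem _
  rw [card_sup_zpowers_of_le_ker lastEntry hker hpow, card_zpowers_diagT hneg, hS₁]
  ring

theorem card_zpowers_diagT_sup_diagS₁_sup_diagS₃ {a b c d : ℕ} (hdet : a * d = b * c + 1) {w : M}
    (hw : w ^ (2 * b) = -1) (hord : orderOf w = 4 * b) (hneg : (-1 : M) ≠ 1) :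
    Nat.card ↥(Subgroup.zpowers (diagT M) ⊔ Subgroup.zpowers (diagS₁ a w) ⊔
      Subgroup.zpowers (diagS₃ d w)) = 16 * b := by
  let lastRatio : (Fin 4 → M) →* M :=
    Pi.evalMonoidHom (fun _ => M) 2 / Pi.evalMonoidHom (fun _ => M) 3
  have hS₃ : orderOf (lastRatio (diagS₃ d w)) = 2 := by
    have hval : lastRatio (diagS₃ d w) = -1 := by
      change -w ^ d / w ^ d = -1
      rw [div_eq_iff_eq_mul, neg_one_mul]
    rw [hval]
    exact orderOf_eq_prime (neg_one_sq (R := M)) hneg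
  have hker :
      Subgroup.zpowers (diagT M) ⊔ Subgroup.zpowers (diagS₁ a w) ≤ lastRatio.ker := by
    simp only [sup_le_iff, Subgroup.zpowers_le, MonoidHom.mem_ker]
    exact ⟨div_self' _, div_self' _⟩
  have hpow : diagS₃ d w ^ orderOf (lastRatio (diagS₃ d w)) ∈
      Subgroup.zpowers (diagT M) ⊔ Subgroup.zpowers (diagS₁ a w) := by
    rw [hS₃, diagS₃_sq hdet hw]
    exact Subgroup.mul_mem_sup (Subgroup.npow_mem_zpowers _ _) (Subgroup.npow_mem_zpowers _ _)
  rw [card_sup_zpowers_of_le_ker lastRatio hker hpow,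
    card_zpowers_diagT_sup_diagS₁ hw hord hneg, hS₃]
  ring

theorem card_closure_diagS {a b c d : ℕ} (hdet : a * d = b * c + 1) {w : M}
    (hw : w ^ (2 * b) = -1) (hord : orderOf w = 4 * b) (hneg : (-1 : M) ≠ 1) :
    Nat.card (Subgroup.closure {diagS₁ a w, diagS₂ a w, diagS₃ d w, diagS₄ d w}) = 16 * b := by
  have hS₄ : diagS₄ d w ∈ Subgroup.zpowers (diagT M) ⊔ Subgroup.zpowers (diagS₁ a w) ⊔
      Subgroup.zpowers (diagS₃ d w) := by
    rw [diagS₄_eq hw a d]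
    exact Subgroup.mul_mem_sup
      (Subgroup.mul_mem_sup (Subgroup.npow_mem_zpowers _ _) (Subgroup.npow_mem_zpowers _ _))
      (Subgroup.mem_zpowers _)
  rw [diagS₂_eq, closure_eq_sup_zpowers hS₄,
    card_zpowers_diagT_sup_diagS₁_sup_diagS₃ hdet hw hord hneg]

end DiagonalSubgroups

section DiagonalMatrices

variable {n R : Type*} [Fintype n] [DecidableEq n]

/-- The homomorphism sending a vector of units to the invertible diagonal matrix with these
entries; it transfers computations with the `Sᵢ` to a commutative group. -/
def diagonalUnits (n R : Type*) [Fintype n] [DecidableEq n] [Semiring R] :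
    (n → Rˣ) →* (Matrix n n R)ˣ :=
  (Units.map (Matrix.diagonalRingHom n R).toMonoidHom).comp
    (MulEquiv.piUnits (M := fun _ : n => R)).symm.toMonoidHom

theorem coe_diagonalUnits [Semiring R] (v : n → Rˣ) :
    (diagonalUnits n R v : Matrix n n R) = Matrix.diagonal fun i => (v i : R) :=
  rfl

theorem diagonalUnits_injective [Semiring R] : Function.Injective (diagonalUnits n R) := by
  intro v v' h
  have hdiag := congrArg Units.val h
  rw [coe_diagonalUnits, coe_diagonalUnits] at hdiag
  funext i
  exact Units.ext (congrFun (Matrix.diagonal_injective hdiag) i)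

theorem coe_diagonalUnits_vec_four [Semiring R] (p q r s : Rˣ) :
    (diagonalUnits (Fin 4) R ![p, q, r, s] : Matrix (Fin 4) (Fin 4) R) =
      Matrix.diagonal ![(p : R), q, r, s] := by
  rw [coe_diagonalUnits]
  congr 1
  funext i
  fin_cases i <;> rfl

theorem closure_eq_map_diagonalUnits [CommRing R] (a d : ℕ) (w : Rˣ)
    {S₁ S₂ S₃ S₄ : (Matrix (Fin 4) (Fin 4) R)ˣ}
    (hS₁ : (S₁ : Matrix (Fin 4) (Fin 4) R) = Matrix.diagonal ![-(w : R) ^ a, w ^ a, w, w])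
    (hS₂ : (S₂ : Matrix (Fin 4) (Fin 4) R) = Matrix.diagonal ![(w : R) ^ a, -w ^ a, w, w])
    (hS₃ : (S₃ : Matrix (Fin 4) (Fin 4) R) = Matrix.diagonal ![(w : R), w, -w ^ d, w ^ d])
    (hS₄ : (S₄ : Matrix (Fin 4) (Fin 4) R) = Matrix.diagonal ![(w : R), w, w ^ d, -w ^ d]) :
    Subgroup.closure {S₁, S₂, S₃, S₄} =
      (Subgroup.closure {diagS₁ a w, diagS₂ a w, diagS₃ d w, diagS₄ d w}).map
        (diagonalUnits (Fin 4) R) := by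
  have h₁ : S₁ = diagonalUnits (Fin 4) R (diagS₁ a w) :=
    Units.ext (by simp [hS₁, diagS₁, coe_diagonalUnits_vec_four])
  have h₂ : S₂ = diagonalUnits (Fin 4) R (diagS₂ a w) :=
    Units.ext (by simp [hS₂, diagS₂, coe_diagonalUnits_vec_four])
  have h₃ : S₃ = diagonalUnits (Fin 4) R (diagS₃ d w) :=
    Units.ext (by simp [hS₃, diagS₃, coe_diagonalUnits_vec_four])
  have h₄ : S₄ = diagonalUnits (Fin 4) R (diagS₄ d w) :=
    Units.ext (by simp [hS₄, diagS₄, coe_diagonalUnits_vec_four])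
  simp only [MonoidHom.map_closure, Set.image_insert_eq, Set.image_singleton, h₁, h₂, h₃, h₄]

end DiagonalMatrices

theorem units_pow_eq_neg_one_of_isPrimitiveRoot {R : Type*} [CommRing R] [NoZeroDivisors R] {k : ℕ}
    (hk : 0 < k) {w : Rˣ} (hw : IsPrimitiveRoot w (2 * k)) : w ^ k = -1 := by
  have hhalf : IsPrimitiveRoot (w ^ k) 2 := hw.pow (by omega) (mul_comm 2 k)
  exact Units.ext (IsPrimitiveRoot.coe_units_iff.2 hhalf).eq_neg_one_of_two_right

theorem stmt_15_general {R : Type*} [CommRing R] [NoZeroDivisors R] (a b c d : ℕ) (hb : 0 < b)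
    (hdet : a * d = b * c + 1) (ω : R) (hω : IsPrimitiveRoot ω (4 * b))
    (S₁ S₂ S₃ S₄ : (Matrix (Fin 4) (Fin 4) R)ˣ)
    (hS₁ : (S₁ : Matrix (Fin 4) (Fin 4) R) = Matrix.diagonal ![-ω ^ a, ω ^ a, ω, ω])
    (hS₂ : (S₂ : Matrix (Fin 4) (Fin 4) R) = Matrix.diagonal ![ω ^ a, -ω ^ a, ω, ω])
    (hS₃ : (S₃ : Matrix (Fin 4) (Fin 4) R) = Matrix.diagonal ![ω, ω, -ω ^ d, ω ^ d])
    (hS₄ : (S₄ : Matrix (Fin 4) (Fin 4) R) = Matrix.diagonal ![ω, ω, ω ^ d, -ω ^ d]) :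
    (∀ x ∈ Subgroup.closure {S₁, S₂, S₃, S₄}, ∀ y ∈ Subgroup.closure {S₁, S₂, S₃, S₄},
        x * y = y * x) ∧
      Finite (Subgroup.closure {S₁, S₂, S₃, S₄} : Subgroup (Matrix (Fin 4) (Fin 4) R)ˣ) ∧
      Nat.card (Subgroup.closure {S₁, S₂, S₃, S₄} : Subgroup (Matrix (Fin 4) (Fin 4) R)ˣ) =
        16 * b := by
  obtain ⟨w, rfl⟩ : IsUnit ω := hω.isUnit (by omega)
  have hw : IsPrimitiveRoot w (4 * b) := IsPrimitiveRoot.coe_units_iff.1 hω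
  have hhalf : w ^ (2 * b) = -1 :=
    units_pow_eq_neg_one_of_isPrimitiveRoot (by omega) (by convert hw using 1; ring)
  have hneg : (-1 : Rˣ) ≠ 1 := hhalf ▸ hw.pow_ne_one_of_pos_of_lt (by omega) (by omega)
  have hmap := closure_eq_map_diagonalUnits a d w hS₁ hS₂ hS₃ hS₄
  have hcard : Nat.card (Subgroup.closure {S₁, S₂, S₃, S₄}) = 16 * b := by
    rw [hmap, Subgroup.card_map_of_injective diagonalUnits_injective,
      card_closure_diagS hdet hhalf hw.eq_orderOf.symm hneg]
  have hcomm : IsMulCommutative (Subgroup.closure {S₁, S₂, S₃, S₄}) := by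
    rw [hmap]
    infer_instance
  exact ⟨fun x hx y hy => setLike_mul_comm hx hy, Nat.finite_of_card_ne_zero (by omega), hcard⟩

theorem stmt_15 (a b c d : ℕ) (ha : 0 < a) (hb : 0 < b) (hc : 0 < c) (hd : 0 < d)
    (hdet : a * d = b * c + 1) (ω : ℂ) (hω : IsPrimitiveRoot ω (4 * b))
    (S₁ S₂ S₃ S₄ : (Matrix (Fin 4) (Fin 4) ℂ)ˣ)
    (hS₁ : (S₁ : Matrix (Fin 4) (Fin 4) ℂ) = Matrix.diagonal ![-ω ^ a, ω ^ a, ω, ω])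
    (hS₂ : (S₂ : Matrix (Fin 4) (Fin 4) ℂ) = Matrix.diagonal ![ω ^ a, -ω ^ a, ω, ω])
    (hS₃ : (S₃ : Matrix (Fin 4) (Fin 4) ℂ) = Matrix.diagonal ![ω, ω, -ω ^ d, ω ^ d])
    (hS₄ : (S₄ : Matrix (Fin 4) (Fin 4) ℂ) = Matrix.diagonal ![ω, ω, ω ^ d, -ω ^ d]) :
    (∀ x ∈ Subgroup.closure {S₁, S₂, S₃, S₄}, ∀ y ∈ Subgroup.closure {S₁, S₂, S₃, S₄},
        x * y = y * x) ∧
      Finite (Subgroup.closure {S₁, S₂, S₃, S₄} : Subgroup (Matrix (Fin 4) (Fin 4) ℂ)ˣ) ∧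
      Nat.card (Subgroup.closure {S₁, S₂, S₃, S₄} : Subgroup (Matrix (Fin 4) (Fin 4) ℂ)ˣ) =
        16 * b :=
  stmt_15_general a b c d hb hdet ω hω S₁ S₂ S₃ S₄ hS₁ hS₂ hS₃ hS₄
end
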